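/- Moran's multi-dimensional Gaussian test φ is inadmissible among regular tests: φ ∈ Φ₀(α) \ A₀(α), i.e. there exists φ' ∈ Φ₀(α) with β_{φ'}(θ) ≥ β_φ(θ) for all θ ∈ ℝ^d\{0} and strict inequality for some θ ≠ 0. -/

import Mathlib

open MeasureTheory ProbabilityTheory Filter
open scoped RealInnerProductSpace

/-!
In the Gaussian shift model the likelihood ratio `dP_θ/dP_0` is `exp (⟪θ, x₁ + x₂⟫ - ‖θ‖²)`. Hence
a bump on a ball around `p`, weighted by the inverse of the density of `P_0`, contributes to the
power a term proportional to `exp ⟪θ, p₁ + p₂⟫`, with a positive factor independent of `p`. Take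
`p`, `q₊`, `q₋` whose coordinate sums are `s`, `s + e`, `s - e`. Adding small bumps at `q₊` and `q₋`
while removing two at `p` changes the power by a positive multiple of
`exp ⟪θ, s⟫ * (cosh ⟪θ, e⟫ - 1)`, which is nonnegative and vanishes at `θ = 0`. A test can be
perturbed in this way as soon as it stays below `1` near `q₊` and `q₋` and above `0` near `p`.
Moran's test does so along any line through the origin, since its acceptance region contains points
`(a • e, b • e)` with `a > 0 > b` and `a + b` arbitrarily large.
-/

open scoped Topology

theorem withDensity_map_add_right {V : Type*} [AddGroup V] [MeasurableSpace V] [MeasurableAdd V]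
    (μ : Measure V) [μ.IsAddRightInvariant] (f : V → ENNReal) (c : V) :
    (μ.withDensity f).map (· + c) = μ.withDensity fun x => f (x - c) := by
  ext s hs
  rw [Measure.map_apply (measurable_add_const c) hs, withDensity_apply _ hs,
    withDensity_apply _ (measurable_add_const c hs)]
  simpa only [add_sub_cancel_right] using
    (measurePreserving_add_right μ c).setLIntegral_comp_preimage_emb
      (measurableEmbedding_addRight c) (fun x => f (x - c)) s

theorem setIntegral_ball_exp_eq_mul {V : Type*} [SeminormedAddCommGroup V] [MeasurableSpace V]
    [BorelSpace V] (μ : Measure V) [μ.IsAddRightInvariant] (f : V →+ ℝ) (p : V) (r : ℝ) :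
    ∫ x in Metric.ball p r, Real.exp (f x) ∂μ =
      Real.exp (f p) * ∫ x in Metric.ball 0 r, Real.exp (f x) ∂μ := by
  rw [← (measurePreserving_add_right μ p).setIntegral_preimage_emb
      (measurableEmbedding_addRight p), ← integral_const_mul]
  simp only [map_add, Real.exp_add, mul_comm, Metric.preimage_add_right_ball, sub_self]

theorem exists_isCompact_superset_of_tendsto_cocompact {X : Type*} [TopologicalSpace X]
    {f : X → ℝ} (hf : Tendsto f (cocompact X) (𝓝 0)) {ε : ℝ} (hε : 0 < ε) :
    ∃ K : Set X, IsCompact K ∧ {x | ε ≤ f x} ⊆ K := by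
  simpa only [Set.compl_ofPred, not_lt] using mem_cocompact'.1 (hf.eventually_lt_const hε)

theorem tendsto_add_diag_cocompact {V : Type*} [AddGroup V] [TopologicalSpace V]
    [IsTopologicalAddGroup V] (u : V × V) :
    Tendsto (fun θ => u + (θ, θ)) (cocompact V) (cocompact (V × V)) := by
  have fst_tendsto : Tendsto (Prod.fst ∘ fun θ => u + (θ, θ)) (cocompact V) (cocompact V) :=
    (Homeomorph.addLeft u.1).isClosedEmbedding.tendsto_cocompact
  exact (tendsto_comap_iff.2 fst_tendsto).mono_right (comap_cocompact_le continuous_fst)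

section GaussianDensity

variable {E : Type*} [NormedAddCommGroup E] [InnerProductSpace ℝ E]

/-- The density of the standard Gaussian measure `stdGaussian E` with respect to `volume`. -/
noncomputable def stdGaussianPDFReal (x : E) : ℝ :=
  (2 * Real.pi) ^ (-(Module.finrank ℝ E : ℝ) / 2) * Real.exp (-(1 / 2) * ‖x‖ ^ 2)

theorem stdGaussianPDFReal_pos (x : E) : 0 < stdGaussianPDFReal x := by
  unfold stdGaussianPDFReal
  positivity

theorem continuous_stdGaussianPDFReal : Continuous (stdGaussianPDFReal : E → ℝ) := by
  unfold stdGaussianPDFReal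
  fun_prop

theorem stdGaussianPDFReal_mul (x y : E) :
    stdGaussianPDFReal x * stdGaussianPDFReal y =
      (2 * Real.pi) ^ (-(Module.finrank ℝ E : ℝ)) * Real.exp (-(‖x‖ ^ 2 + ‖y‖ ^ 2) / 2) := by
  unfold stdGaussianPDFReal
  rw [mul_mul_mul_comm, ← Real.rpow_add (by positivity), ← Real.exp_add]
  ring_nf

theorem stdGaussianPDFReal_sub_le (x : E) {θ θ₀ : E} {δ : ℝ} (hθ : ‖θ - θ₀‖ ≤ δ) :
    stdGaussianPDFReal (x - θ) ≤ (2 * Real.pi) ^ (-(Module.finrank ℝ E : ℝ) / 2) *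
      (Real.exp (δ ^ 2 / 2) * Real.exp (-(1 / 4) * ‖x - θ₀‖ ^ 2)) := by
  have triangle_sq : ‖x - θ₀‖ ^ 2 ≤ 2 * ‖x - θ‖ ^ 2 + 2 * δ ^ 2 := by
    have h : ‖x - θ₀‖ ≤ ‖x - θ‖ + δ := (norm_sub_le_norm_sub_add_norm_sub x θ θ₀).trans (by gcongr)
    nlinarith [norm_nonneg (x - θ₀), sq_nonneg (‖x - θ‖ - δ)]
  unfold stdGaussianPDFReal
  rw [← Real.exp_add]
  gcongr
  linarith

variable [FiniteDimensional ℝ E] [MeasurableSpace E] [BorelSpace E]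

theorem integrable_exp_neg_mul_sq_norm {b : ℝ} (hb : 0 < b) :
    Integrable fun x : E => Real.exp (-b * ‖x‖ ^ 2) := by
  have h := (GaussianFourier.integrable_cexp_neg_mul_sq_norm_add (b := b) (by simpa using hb) 0
    (0 : E)).norm
  simpa [Complex.norm_exp, ← Complex.ofReal_pow] using h

theorem integrable_stdGaussianPDFReal : Integrable (stdGaussianPDFReal : E → ℝ) :=
  (integrable_exp_neg_mul_sq_norm (by norm_num)).const_mul _

theorem integral_stdGaussianPDFReal_smul_cexp (t : E) :
    ∫ x : E, stdGaussianPDFReal x • Complex.exp (⟪x, t⟫ * Complex.I) =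
      Complex.exp (-‖t‖ ^ 2 / 2) := by
  have normalization : (((2 * Real.pi) ^ (-(Module.finrank ℝ E : ℝ) / 2) : ℝ) : ℂ) *
      (Real.pi / ((1 / 2 : ℝ) : ℂ)) ^ (Module.finrank ℝ E / 2 : ℂ) = 1 := by
    have two_pi : (Real.pi / ((1 / 2 : ℝ) : ℂ)) = ((2 * Real.pi : ℝ) : ℂ) := by push_cast; ring
    have half_dim : (Module.finrank ℝ E / 2 : ℂ) = ((Module.finrank ℝ E / 2 : ℝ) : ℂ) := by
      push_cast; ring
    rw [two_pi, half_dim, ← Complex.ofReal_cpow (by positivity), ← Complex.ofReal_mul,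
      ← Real.rpow_add (by positivity)]
    simp [neg_div]
  have fourier := GaussianFourier.integral_cexp_neg_mul_sq_norm_add (b := ((1 / 2 : ℝ) : ℂ))
    (by norm_num) Complex.I t
  calc ∫ x : E, stdGaussianPDFReal x • Complex.exp (⟪x, t⟫ * Complex.I)
      = ∫ x : E, (((2 * Real.pi) ^ (-(Module.finrank ℝ E : ℝ) / 2) : ℝ) : ℂ) *
          Complex.exp (-((1 / 2 : ℝ) : ℂ) * ‖x‖ ^ 2 + Complex.I * ⟪t, x⟫) := by
        congr 1 with x
        rw [Complex.exp_add, real_inner_comm t x, Complex.real_smul]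
        unfold stdGaussianPDFReal
        push_cast
        ring_nf
    _ = Complex.exp (-‖t‖ ^ 2 / 2) := by
        rw [integral_const_mul, fourier, ← mul_assoc, normalization, one_mul, Complex.I_sq]
        push_cast
        ring_nf

theorem stdGaussian_eq_withDensity :
    stdGaussian E = volume.withDensity fun x => ENNReal.ofReal (stdGaussianPDFReal x) := by
  have : IsFiniteMeasure (volume.withDensity fun x : E => ENNReal.ofReal (stdGaussianPDFReal x)) :=
    isFiniteMeasure_withDensity_ofReal integrable_stdGaussianPDFReal.2
  refine Measure.ext_of_charFun (funext fun t => ?_)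
  rw [charFun_stdGaussian, charFun_apply, integral_withDensity_eq_integral_toReal_smul
    continuous_stdGaussianPDFReal.measurable.ennreal_ofReal
    (ae_of_all _ fun _ => ENNReal.ofReal_lt_top), ← integral_stdGaussianPDFReal_smul_cexp]
  simp only [ENNReal.toReal_ofReal (stdGaussianPDFReal_pos _).le]

theorem stdGaussian_ae_ne [Nontrivial E] (x₀ : E) : ∀ᵐ x ∂stdGaussian E, x ≠ x₀ := by
  rw [stdGaussian_eq_withDensity]
  exact (withDensity_absolutelyContinuous _ _).ae_le (Measure.ae_ne volume x₀)

theorem stdGaussian_map_inner {u : E} (hu : ‖u‖ = 1) :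
    (stdGaussian E).map (fun x => ⟪u, x⟫) = gaussianReal 0 1 := by
  have h := IsGaussian.map_eq_gaussianReal (μ := stdGaussian E) (innerSL ℝ u)
  rw [integral_strongDual_stdGaussian, variance_dual_stdGaussian, innerSL_apply_norm, hu] at h
  simpa using h

end GaussianDensity

section TwoSampleModel

variable {E : Type*} [NormedAddCommGroup E] [InnerProductSpace ℝ E]

/-- The density of `twoSampleLaw θ` with respect to `volume`. -/
noncomputable def twoSamplePDFReal (θ : E) (x : E × E) : ℝ :=
  stdGaussianPDFReal (x.1 - θ) * stdGaussianPDFReal (x.2 - θ)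

theorem twoSamplePDFReal_pos (θ : E) (x : E × E) : 0 < twoSamplePDFReal θ x :=
  mul_pos (stdGaussianPDFReal_pos _) (stdGaussianPDFReal_pos _)

theorem twoSamplePDFReal_eq (θ : E) (x : E × E) :
    twoSamplePDFReal θ x = (2 * Real.pi) ^ (-(Module.finrank ℝ E : ℝ)) *
      Real.exp (-(‖x.1 - θ‖ ^ 2 + ‖x.2 - θ‖ ^ 2) / 2) :=
  stdGaussianPDFReal_mul _ _

theorem continuous_twoSamplePDFReal :
    Continuous fun z : E × (E × E) => twoSamplePDFReal z.1 z.2 := by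
  have := continuous_stdGaussianPDFReal (E := E)
  unfold twoSamplePDFReal
  fun_prop

variable [FiniteDimensional ℝ E] [MeasurableSpace E]

/-- The law of `(U₁ + θ, U₂ + θ)` for independent standard Gaussian vectors `U₁`, `U₂` of `E`. -/
noncomputable def twoSampleLaw (θ : E) : Measure (E × E) :=
  ((stdGaussian E).prod (stdGaussian E)).map (· + (θ, θ))

theorem twoSampleLaw_zero : twoSampleLaw (0 : E) = (stdGaussian E).prod (stdGaussian E) := by
  simp [twoSampleLaw, ← Prod.zero_eq_mk]

variable [BorelSpace E]

instance (θ : E) : IsProbabilityMeasure (twoSampleLaw θ) :=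
  Measure.isProbabilityMeasure_map (measurable_add_const _).aemeasurable

theorem twoSampleLaw_eq_withDensity (θ : E) :
    twoSampleLaw θ = volume.withDensity fun x => ENNReal.ofReal (twoSamplePDFReal θ x) := by
  have pdf_measurable : Measurable fun x : E => ENNReal.ofReal (stdGaussianPDFReal (x - θ)) :=
    (continuous_stdGaussianPDFReal.comp (continuous_sub_right θ)).measurable.ennreal_ofReal
  calc twoSampleLaw θ
      = ((stdGaussian E).map (· + θ)).prod ((stdGaussian E).map (· + θ)) :=
        (Measure.map_prod_map _ _ (measurable_add_const θ) (measurable_add_const θ)).symm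
    _ = volume.withDensity fun x => ENNReal.ofReal (twoSamplePDFReal θ x) := by
        rw [stdGaussian_eq_withDensity, withDensity_map_add_right,
          prod_withDensity pdf_measurable pdf_measurable, Measure.volume_eq_prod]
        simp only [twoSamplePDFReal, ENNReal.ofReal_mul (stdGaussianPDFReal_pos _).le]

/-- The power `β_φ(θ)` of a test `φ` of the hypothesis `θ = 0`. It is defined for arbitrary
functions `φ`, so that it also measures the effect of a perturbation of a test. -/
noncomputable def testPower (φ : E × E → ℝ) (θ : E) : ℝ :=
  ∫ x, φ x ∂twoSampleLaw θ

theorem testPower_eq_integral_pdf_mul (φ : E × E → ℝ) (θ : E) :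
    testPower φ θ = ∫ x, twoSamplePDFReal θ x * φ x := by
  have pdf_measurable : Measurable (twoSamplePDFReal θ) :=
    (continuous_twoSamplePDFReal.comp (Continuous.prodMk_right θ)).measurable
  rw [testPower, twoSampleLaw_eq_withDensity, integral_withDensity_eq_integral_toReal_smul
    pdf_measurable.ennreal_ofReal (ae_of_all _ fun _ => ENNReal.ofReal_lt_top)]
  simp only [ENNReal.toReal_ofReal (twoSamplePDFReal_pos θ _).le, smul_eq_mul]

end TwoSampleModel

section RegularTests

/-- A (randomized) test: a measurable function with values in `[0, 1]`, the value being the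
probability of rejection. -/
def IsTest {X : Type*} [MeasurableSpace X] (φ : X → ℝ) : Prop :=
  Measurable φ ∧ ∀ x, φ x ∈ Set.Icc (0 : ℝ) 1

theorem IsTest.norm_le_one {X : Type*} [MeasurableSpace X] {φ : X → ℝ} (hφ : IsTest φ) (x : X) :
    ‖φ x‖ ≤ 1 := by
  rw [Real.norm_of_nonneg (hφ.2 x).1]
  exact (hφ.2 x).2

variable {E : Type*} [NormedAddCommGroup E] [InnerProductSpace ℝ E] [FiniteDimensional ℝ E]
  [MeasurableSpace E] [BorelSpace E] {φ : E × E → ℝ}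

variable (E) in
/-- The class `Φ₀(α)` of regular tests: those of level `α` whose type II error `1 - β_φ` is
continuous and vanishes at infinity. Since this error is nonnegative, vanishing at infinity is
expressed by compactness of its superlevel sets. -/
def regularTests (α : ℝ) : Set (E × E → ℝ) :=
  {φ | IsTest φ ∧ testPower φ 0 = α ∧ Continuous (fun θ => 1 - testPower φ θ) ∧
    ∀ ε : ℝ, 0 < ε → ∃ K : Set E, IsCompact K ∧ {θ | ε ≤ 1 - testPower φ θ} ⊆ K}

theorem IsTest.integrable_twoSampleLaw (hφ : IsTest φ) (θ : E) :
    Integrable φ (twoSampleLaw θ) :=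
  .of_bound hφ.1.aestronglyMeasurable 1 (ae_of_all _ hφ.norm_le_one)

theorem IsTest.continuous_testPower (hφ : IsTest φ) : Continuous (testPower φ) := by
  refine continuous_iff_continuousAt.2 fun θ₀ => ?_
  let majorant (y : E) : ℝ := (2 * Real.pi) ^ (-(Module.finrank ℝ E : ℝ) / 2) *
    (Real.exp (1 ^ 2 / 2) * Real.exp (-(1 / 4) * ‖y - θ₀‖ ^ 2))
  have majorant_integrable : Integrable majorant :=
    (((integrable_exp_neg_mul_sq_norm (by norm_num)).comp_sub_right θ₀).const_mul _).const_mul _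
  have pdf_measurable (θ : E) : Measurable (twoSamplePDFReal θ) :=
    (continuous_twoSamplePDFReal.comp (Continuous.prodMk_right θ)).measurable
  rw [funext (testPower_eq_integral_pdf_mul φ)]
  refine continuousAt_of_dominated (bound := fun x => majorant x.1 * majorant x.2)
    (.of_forall fun θ => ((pdf_measurable θ).mul hφ.1).aestronglyMeasurable) ?_
    (majorant_integrable.mul_prod majorant_integrable)
    (ae_of_all _ fun x => (continuous_twoSamplePDFReal.comp
      (Continuous.prodMk_left x)).continuousAt.mul_const _)
  filter_upwards [Metric.closedBall_mem_nhds θ₀ one_pos] with θ hθ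
  have near : ‖θ - θ₀‖ ≤ 1 := mem_closedBall_iff_norm.1 hθ
  refine ae_of_all _ fun x => ?_
  calc ‖twoSamplePDFReal θ x * φ x‖ ≤ twoSamplePDFReal θ x := by
        rw [norm_mul, Real.norm_of_nonneg (twoSamplePDFReal_pos θ x).le]
        exact mul_le_of_le_one_right (twoSamplePDFReal_pos θ x).le (hφ.norm_le_one x)
    _ ≤ majorant x.1 * majorant x.2 :=
        mul_le_mul (stdGaussianPDFReal_sub_le _ near) (stdGaussianPDFReal_sub_le _ near)
          (stdGaussianPDFReal_pos _).le (by positivity)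

theorem IsTest.tendsto_testPower_cocompact (hφ : IsTest φ)
    (h : ∀ u : E × E, Tendsto (fun θ => φ (u + (θ, θ))) (cocompact E) (𝓝 1)) :
    Tendsto (testPower φ) (cocompact E) (𝓝 1) := by
  have power_eq (θ : E) : testPower φ θ =
      ∫ u, φ (u + (θ, θ)) ∂(stdGaussian E).prod (stdGaussian E) :=
    integral_map (measurable_add_const _).aemeasurable hφ.1.aestronglyMeasurable
  have cocompact_countable : (cocompact E).IsCountablyGenerated := by
    rw [← Metric.cobounded_eq_cocompact, ← comap_norm_atTop]
    infer_instance
  rw [funext power_eq]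
  simpa using tendsto_integral_filter_of_dominated_convergence (fun _ => 1)
    (.of_forall fun θ => (hφ.1.comp (measurable_add_const (θ, θ))).aestronglyMeasurable)
    (.of_forall fun θ => ae_of_all _ fun u => hφ.norm_le_one _)
    (integrable_const 1) (ae_of_all ((stdGaussian E).prod (stdGaussian E)) h)

theorem IsTest.mem_regularTests (hφ : IsTest φ) {α : ℝ} (hα : testPower φ 0 = α)
    (h : ∀ u : E × E, Tendsto (fun θ => φ (u + (θ, θ))) (cocompact E) (𝓝 1)) :
    φ ∈ regularTests E α := by
  have error_tendsto : Tendsto (fun θ => 1 - testPower φ θ) (cocompact E) (𝓝 0) := by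
    simpa using (hφ.tendsto_testPower_cocompact h).const_sub 1
  exact ⟨hφ, hα, continuous_const.sub hφ.continuous_testPower,
    fun _ => exists_isCompact_superset_of_tendsto_cocompact error_tendsto⟩

end RegularTests

section Perturbation

variable {E : Type*} [NormedAddCommGroup E]

/-- The indicator of the ball of radius `r` around `p`, divided by the density of `twoSampleLaw 0`
up to a normalizing constant. -/
noncomputable def gaussianBump (p : E × E) (r : ℝ) : E × E → ℝ :=
  (Metric.ball p r).indicator fun x => Real.exp ((‖x.1‖ ^ 2 + ‖x.2‖ ^ 2) / 2)

theorem gaussianBump_nonneg (p : E × E) (r : ℝ) (x : E × E) : 0 ≤ gaussianBump p r x :=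
  Set.indicator_nonneg (fun _ _ => (Real.exp_pos _).le) x

theorem gaussianBump_of_notMem {p x : E × E} {r : ℝ} (hx : x ∉ Metric.ball p r) :
    gaussianBump p r x = 0 :=
  Set.indicator_of_notMem hx _

theorem gaussianBump_le (p : E × E) (r : ℝ) (x : E × E) :
    gaussianBump p r x ≤ Real.exp ((‖p‖ + r) ^ 2) := by
  refine Set.indicator_le' (g := fun _ => Real.exp ((‖p‖ + r) ^ 2)) (fun y hy => ?_)
    (fun _ _ => (Real.exp_pos _).le) x
  have norm_le : ‖y‖ ≤ ‖p‖ + r := by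
    linarith [norm_sub_norm_le y p, mem_ball_iff_norm.1 hy]
  have fst_sq_le : ‖y.1‖ ^ 2 ≤ (‖p‖ + r) ^ 2 := by gcongr; exact (norm_fst_le y).trans norm_le
  have snd_sq_le : ‖y.2‖ ^ 2 ≤ (‖p‖ + r) ^ 2 := by gcongr; exact (norm_snd_le y).trans norm_le
  gcongr
  linarith

theorem eventually_mul_gaussianBump_le (p : E × E) (r : ℝ) {c : ℝ} (hc : 0 < c) :
    ∀ᶠ ε in 𝓝[>] (0 : ℝ), ∀ x, ε * gaussianBump p r x ≤ c := by
  have scaled_bound_continuous : Continuous fun ε : ℝ => ε * Real.exp ((‖p‖ + r) ^ 2) := by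
    fun_prop
  have scaled_bound_tendsto :
      Tendsto (fun ε => ε * Real.exp ((‖p‖ + r) ^ 2)) (𝓝[>] 0) (𝓝 0) :=
    (scaled_bound_continuous.tendsto' 0 0 (zero_mul _)).mono_left nhdsWithin_le_nhds
  filter_upwards [scaled_bound_tendsto.eventually_le_const hc, self_mem_nhdsWithin]
    with ε hε hε_pos x
  exact (mul_le_mul_of_nonneg_left (gaussianBump_le p r x) (Set.mem_Ioi.1 hε_pos).le).trans hε

theorem gaussianBump_eventuallyEq_zero [ProperSpace E] (p : E × E) (r : ℝ) :
    gaussianBump p r =ᶠ[cocompact (E × E)] 0 := by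
  filter_upwards [(isCompact_closedBall p r).compl_mem_cocompact] with x hx
  exact gaussianBump_of_notMem fun h => hx (Metric.ball_subset_closedBall h)

/-- The second difference of bumps by which a test is perturbed: mass is added around `q₁` and `q₂`
and twice removed around `p`. -/
noncomputable def bumpDifference (p q₁ q₂ : E × E) (r : ℝ) (x : E × E) : ℝ :=
  gaussianBump q₁ r x + gaussianBump q₂ r x - 2 * gaussianBump p r x

theorem bumpDifference_eventuallyEq_zero [ProperSpace E] (p q₁ q₂ : E × E) (r : ℝ) :
    bumpDifference p q₁ q₂ r =ᶠ[cocompact (E × E)] 0 := by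
  filter_upwards [gaussianBump_eventuallyEq_zero p r, gaussianBump_eventuallyEq_zero q₁ r,
    gaussianBump_eventuallyEq_zero q₂ r] with x hp hq₁ hq₂
  simp [bumpDifference, hp, hq₁, hq₂]

variable [InnerProductSpace ℝ E]

theorem twoSamplePDFReal_mul_gaussianBump (θ : E) (p : E × E) (r : ℝ) (x : E × E) :
    twoSamplePDFReal θ x * gaussianBump p r x = (Metric.ball p r).indicator (fun x =>
      (2 * Real.pi) ^ (-(Module.finrank ℝ E : ℝ)) * Real.exp (-‖θ‖ ^ 2) *
        Real.exp ⟪θ, x.1 + x.2⟫) x := by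
  rw [gaussianBump, ← Set.indicator_mul_right]
  congr 1 with x
  rw [twoSamplePDFReal_eq, mul_assoc, mul_assoc, ← Real.exp_add, ← Real.exp_add,
    norm_sub_sq_real, norm_sub_sq_real, inner_add_right, real_inner_comm θ, real_inner_comm θ]
  ring_nf

variable [FiniteDimensional ℝ E] [MeasurableSpace E] [BorelSpace E]

theorem measurable_gaussianBump (p : E × E) (r : ℝ) : Measurable (gaussianBump p r) :=
  Measurable.indicator (by fun_prop) measurableSet_ball

theorem integrable_gaussianBump (p : E × E) (r : ℝ) (θ : E) :
    Integrable (gaussianBump p r) (twoSampleLaw θ) :=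
  .of_bound (measurable_gaussianBump p r).aestronglyMeasurable (Real.exp ((‖p‖ + r) ^ 2))
    (ae_of_all _ fun x => by
      rw [Real.norm_of_nonneg (gaussianBump_nonneg p r x)]
      exact gaussianBump_le p r x)

theorem testPower_gaussianBump_eq_setIntegral (p : E × E) (r : ℝ) (θ : E) :
    testPower (gaussianBump p r) θ =
      (2 * Real.pi) ^ (-(Module.finrank ℝ E : ℝ)) * Real.exp (-‖θ‖ ^ 2) *
        ∫ x : E × E in Metric.ball p r, Real.exp ⟪θ, x.1 + x.2⟫ := by
  simp only [testPower_eq_integral_pdf_mul, twoSamplePDFReal_mul_gaussianBump,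
    integral_indicator measurableSet_ball, integral_const_mul]

theorem testPower_gaussianBump (p : E × E) (r : ℝ) (θ : E) :
    testPower (gaussianBump p r) θ =
      Real.exp ⟪θ, p.1 + p.2⟫ * testPower (gaussianBump 0 r) θ := by
  have : (volume : Measure (E × E)).IsAddRightInvariant := by
    rw [Measure.volume_eq_prod]
    infer_instance
  let innerSum : E × E →+ ℝ :=
    (innerSL ℝ θ ∘L (ContinuousLinearMap.fst ℝ E E + ContinuousLinearMap.snd ℝ E E) :)
  have translate := setIntegral_ball_exp_eq_mul volume innerSum p r
  change ∫ x : E × E in Metric.ball p r, Real.exp ⟪θ, x.1 + x.2⟫ =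
    Real.exp ⟪θ, p.1 + p.2⟫ * ∫ x : E × E in Metric.ball 0 r, Real.exp ⟪θ, x.1 + x.2⟫ at translate
  rw [testPower_gaussianBump_eq_setIntegral, testPower_gaussianBump_eq_setIntegral, translate]
  ring

theorem testPower_gaussianBump_pos (p : E × E) {r : ℝ} (hr : 0 < r) (θ : E) :
    0 < testPower (gaussianBump p r) θ := by
  have ball_ne_zero : NeZero ((volume : Measure (E × E)).restrict (Metric.ball p r)) :=
    ⟨mt Measure.restrict_eq_zero.1 (Metric.measure_ball_pos _ _ hr).ne'⟩
  have exp_integrable : IntegrableOn (fun x : E × E => Real.exp ⟪θ, x.1 + x.2⟫)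
      (Metric.ball p r) :=
    ((Continuous.continuousOn (by fun_prop)).integrableOn_compact
      (isCompact_closedBall p r)).mono_set Metric.ball_subset_closedBall
  rw [testPower_gaussianBump_eq_setIntegral]
  have := integral_exp_pos exp_integrable
  positivity

theorem integrable_bumpDifference (p q₁ q₂ : E × E) (r : ℝ) (θ : E) :
    Integrable (bumpDifference p q₁ q₂ r) (twoSampleLaw θ) :=
  ((integrable_gaussianBump q₁ r θ).add (integrable_gaussianBump q₂ r θ)).sub
    ((integrable_gaussianBump p r θ).const_mul 2)

theorem testPower_bumpDifference {p q₁ q₂ : E × E} {e : E} (h₁ : q₁.1 + q₁.2 = p.1 + p.2 + e)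
    (h₂ : q₂.1 + q₂.2 = p.1 + p.2 - e) (r : ℝ) (θ : E) :
    testPower (bumpDifference p q₁ q₂ r) θ =
      2 * testPower (gaussianBump p r) θ * (Real.cosh ⟪θ, e⟫ - 1) := by
  have linearity : testPower (bumpDifference p q₁ q₂ r) θ =
      testPower (gaussianBump q₁ r) θ + testPower (gaussianBump q₂ r) θ -
        2 * testPower (gaussianBump p r) θ := by
    have hq₁ := integrable_gaussianBump q₁ r θ
    have hq₂ := integrable_gaussianBump q₂ r θ
    exact (integral_sub (hq₁.add hq₂) ((integrable_gaussianBump p r θ).const_mul 2)).trans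
      (congrArg₂ _ (integral_add hq₁ hq₂) (integral_const_mul _ _))
  rw [linearity, testPower_gaussianBump q₁, testPower_gaussianBump q₂, testPower_gaussianBump p,
    h₁, h₂, inner_add_right _ _ e, inner_sub_right _ _ e, sub_eq_add_neg ⟪θ, p.1 + p.2⟫,
    Real.exp_add, Real.exp_add, Real.cosh_eq]
  ring

theorem IsTest.exists_add_bumpDifference {φ : E × E → ℝ} (hφ : IsTest φ) {p q₁ q₂ : E × E}
    {r c : ℝ} (hc : 0 < c) (hp : ∀ x ∈ Metric.ball p r, c ≤ φ x)
    (hq₁ : ∀ x ∈ Metric.ball q₁ r, φ x ≤ 1 - c) (hq₂ : ∀ x ∈ Metric.ball q₂ r, φ x ≤ 1 - c) :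
    ∃ ε : ℝ, 0 < ε ∧ IsTest fun x => φ x + ε * bumpDifference p q₁ q₂ r x := by
  have half_pos : 0 < c / 2 := by positivity
  have eventually_pos : ∀ᶠ ε in 𝓝[>] (0 : ℝ), 0 < ε := self_mem_nhdsWithin
  obtain ⟨ε, hε_pos, p_le, q₁_le, q₂_le⟩ := (eventually_pos.and
    ((eventually_mul_gaussianBump_le p r half_pos).and
      ((eventually_mul_gaussianBump_le q₁ r half_pos).and
        (eventually_mul_gaussianBump_le q₂ r half_pos)))).exists
  refine ⟨ε, hε_pos, ?_, fun x => ?_⟩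
  · have := hφ.1
    have := measurable_gaussianBump p r
    have := measurable_gaussianBump q₁ r
    have := measurable_gaussianBump q₂ r
    unfold bumpDifference
    fun_prop
  have p_nonneg := mul_nonneg hε_pos.le (gaussianBump_nonneg p r x)
  have q₁_nonneg := mul_nonneg hε_pos.le (gaussianBump_nonneg q₁ r x)
  have q₂_nonneg := mul_nonneg hε_pos.le (gaussianBump_nonneg q₂ r x)
  specialize p_le x
  specialize q₁_le x
  specialize q₂_le x
  obtain ⟨φ_nonneg, φ_le_one⟩ := hφ.2 x
  simp only [bumpDifference, mul_sub, mul_add, Set.mem_Icc]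
  constructor
  · by_cases hx : x ∈ Metric.ball p r
    · linarith [hp x hx]
    · simp only [gaussianBump_of_notMem hx]
      linarith
  · by_cases hx : x ∈ Metric.ball q₁ r ∪ Metric.ball q₂ r
    · linarith [hx.elim (hq₁ x) (hq₂ x)]
    · simp only [Set.mem_union, not_or] at hx
      simp only [gaussianBump_of_notMem hx.1, gaussianBump_of_notMem hx.2]
      linarith

theorem IsTest.exists_testPower_lt {φ : E × E → ℝ} (hφ : IsTest φ) {p q₁ q₂ : E × E} {e : E}
    (he : e ≠ 0) (h₁ : q₁.1 + q₁.2 = p.1 + p.2 + e) (h₂ : q₂.1 + q₂.2 = p.1 + p.2 - e)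
    {c : ℝ} (hc : 0 < c) (hp : ∀ᶠ x in 𝓝 p, c ≤ φ x) (hq₁ : ∀ᶠ x in 𝓝 q₁, φ x ≤ 1 - c)
    (hq₂ : ∀ᶠ x in 𝓝 q₂, φ x ≤ 1 - c) :
    ∃ φ' : E × E → ℝ, IsTest φ' ∧ φ' =ᶠ[cocompact (E × E)] φ ∧ testPower φ' 0 = testPower φ 0 ∧
      (∀ θ, testPower φ θ ≤ testPower φ' θ) ∧ testPower φ e < testPower φ' e := by
  obtain ⟨r₀, hr₀, hp⟩ := Metric.eventually_nhds_iff_ball.1 hp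
  obtain ⟨r₁, hr₁, hq₁⟩ := Metric.eventually_nhds_iff_ball.1 hq₁
  obtain ⟨r₂, hr₂, hq₂⟩ := Metric.eventually_nhds_iff_ball.1 hq₂
  obtain ⟨r, hr, hrr₀, hrr₁, hrr₂⟩ : ∃ r > 0, r ≤ r₀ ∧ r ≤ r₁ ∧ r ≤ r₂ :=
    ⟨min r₀ (min r₁ r₂), by positivity, by simp⟩
  obtain ⟨ε, hε, hφ'⟩ := hφ.exists_add_bumpDifference hc
    (fun x hx => hp x (Metric.ball_subset_ball hrr₀ hx))
    (fun x hx => hq₁ x (Metric.ball_subset_ball hrr₁ hx))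
    (fun x hx => hq₂ x (Metric.ball_subset_ball hrr₂ hx))
  have power_eq (θ : E) : testPower (fun x => φ x + ε * bumpDifference p q₁ q₂ r x) θ =
      testPower φ θ + ε * (2 * testPower (gaussianBump p r) θ * (Real.cosh ⟪θ, e⟫ - 1)) := by
    rw [← testPower_bumpDifference h₁ h₂]
    simp only [testPower]
    rw [integral_add (hφ.integrable_twoSampleLaw θ)
      ((integrable_bumpDifference p q₁ q₂ r θ).const_mul ε), integral_const_mul]
  have bump_pos := testPower_gaussianBump_pos p hr
  refine ⟨_, hφ', ?_, ?_, fun θ => ?_, ?_⟩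
  · filter_upwards [bumpDifference_eventuallyEq_zero p q₁ q₂ r] with x hx
    simp [hx]
  · simp [power_eq]
  · have cosh_sub_one_nonneg := sub_nonneg.2 (Real.one_le_cosh ⟪θ, e⟫)
    have := bump_pos θ
    rw [power_eq]
    exact le_add_of_nonneg_right (by positivity)
  · have cosh_sub_one_pos := sub_pos.2 (Real.one_lt_cosh.2 (inner_self_ne_zero (𝕜 := ℝ).2 he))
    have := bump_pos e
    rw [power_eq]
    exact lt_add_of_pos_right _ (by positivity)

end Perturbation

section MoranTest

variable {E : Type*} [NormedAddCommGroup E] [InnerProductSpace ℝ E]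

/-- The statistic of Moran's test: the component of `x.2` in the direction of `x.1`. It takes the
junk value `0` where `x.1 = 0`. -/
noncomputable def moranStatistic (x : E × E) : ℝ :=
  ⟪x.1, x.2⟫ / ‖x.1‖

/-- Moran's test with critical value `D`. -/
noncomputable def moranTest (D : ℝ) : E × E → ℝ :=
  Set.indicator {x | x.1 ≠ 0 ∧ D < moranStatistic x} fun _ => 1

theorem continuousAt_moranStatistic {x : E × E} (hx : x.1 ≠ 0) :
    ContinuousAt moranStatistic x := by
  unfold moranStatistic
  fun_prop (disch := exact norm_ne_zero_iff.2 hx)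

theorem moranStatistic_smul_smul {e : E} (he : ‖e‖ = 1) {a : ℝ} (ha : 0 < a) (b : ℝ) :
    moranStatistic (a • e, b • e) = b := by
  simp only [moranStatistic, inner_smul_left, inner_smul_right, norm_smul, he,
    real_inner_self_eq_norm_sq, Real.norm_of_nonneg ha.le, conj_trivial]
  field_simp

theorem norm_fst_sub_norm_sub_le_moranStatistic (x : E × E) :
    ‖x.1‖ - ‖x.1 - x.2‖ ≤ moranStatistic x := by
  rcases eq_or_ne x.1 0 with hx | hx
  · simp [moranStatistic, hx]
  have inner_eq : ⟪x.1, x.2⟫ = ‖x.1‖ ^ 2 - ⟪x.1, x.1 - x.2⟫ := by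
    rw [inner_sub_right, real_inner_self_eq_norm_sq]
    ring
  rw [moranStatistic, le_div_iff₀ (norm_pos_iff.2 hx), inner_eq]
  linarith [real_inner_le_norm x.1 (x.1 - x.2)]

theorem eventually_moranTest_eq_one {D : ℝ} {x : E × E} (hx : x.1 ≠ 0)
    (hD : D < moranStatistic x) : ∀ᶠ y in 𝓝 x, moranTest D y = 1 := by
  filter_upwards [continuousAt_fst.eventually_ne hx,
    (continuousAt_moranStatistic hx).eventually_const_lt hD] with y hy hDy
  exact Set.indicator_of_mem (Set.mem_ofPred.2 ⟨hy, hDy⟩) _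

theorem eventually_moranTest_eq_zero {D : ℝ} {x : E × E} (hx : x.1 ≠ 0)
    (hD : moranStatistic x < D) : ∀ᶠ y in 𝓝 x, moranTest D y = 0 := by
  filter_upwards [(continuousAt_moranStatistic hx).eventually_lt_const hD] with y hDy
  exact Set.indicator_of_notMem (fun h => h.2.not_gt hDy) _

theorem tendsto_moranStatistic_add_diag [ProperSpace E] (u : E × E) :
    Tendsto (fun θ => moranStatistic (u + (θ, θ))) (cocompact E) atTop := by
  have norm_tendsto : Tendsto (fun θ => ‖u.1 + θ‖) (cocompact E) atTop :=
    tendsto_norm_cocompact_atTop.comp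
      (Homeomorph.addLeft u.1).isClosedEmbedding.tendsto_cocompact
  refine tendsto_atTop_mono (fun θ => ?_)
    (tendsto_atTop_add_const_right _ (-‖u.1 - u.2‖) norm_tendsto)
  simpa [sub_eq_add_neg] using norm_fst_sub_norm_sub_le_moranStatistic (u + (θ, θ))

theorem eventually_moranTest_add_diag_eq_one [ProperSpace E] (D : ℝ) (u : E × E) :
    ∀ᶠ θ in cocompact E, moranTest D (u + (θ, θ)) = 1 := by
  filter_upwards [(tendsto_moranStatistic_add_diag u).eventually_gt_atTop D,
    (tendsto_moranStatistic_add_diag u).eventually_gt_atTop 0] with θ hD hpos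
  have fst_ne_zero : (u + (θ, θ)).1 ≠ 0 := fun h => hpos.ne' (by simp [moranStatistic, h])
  exact Set.indicator_of_mem (Set.mem_ofPred.2 ⟨fst_ne_zero, hD⟩) _

variable [FiniteDimensional ℝ E] [MeasurableSpace E] [BorelSpace E]

theorem measurableSet_moranRejection (D : ℝ) :
    MeasurableSet {x : E × E | x.1 ≠ 0 ∧ D < moranStatistic x} := by
  have statistic_measurable : Measurable (moranStatistic : E × E → ℝ) := by
    unfold moranStatistic
    fun_prop
  exact ((measurableSet_singleton 0).compl.preimage measurable_fst).inter
    (measurableSet_lt measurable_const statistic_measurable)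

theorem isTest_moranTest (D : ℝ) : IsTest (moranTest D : E × E → ℝ) := by
  refine ⟨measurable_const.indicator (measurableSet_moranRejection D), fun x => ?_⟩
  exact ⟨Set.indicator_nonneg (fun _ _ => zero_le_one) x,
    Set.indicator_le_self' (fun _ _ => zero_le_one) x⟩

theorem testPower_moranTest_zero [Nontrivial E] (D : ℝ) :
    testPower (moranTest D) (0 : E) = (gaussianReal 0 1).real (Set.Ioi D) := by
  have conditional_level : ∀ᵐ x ∂stdGaussian E,
      stdGaussian E (Prod.mk x ⁻¹' {x | x.1 ≠ 0 ∧ D < moranStatistic x}) =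
        gaussianReal 0 1 (Set.Ioi D) := by
    filter_upwards [stdGaussian_ae_ne (0 : E)] with x hx
    rw [← stdGaussian_map_inner (norm_smul_inv_norm (𝕜 := ℝ) hx),
      Measure.map_apply (by fun_prop) measurableSet_Ioi]
    congr 1 with y
    simp [hx, moranStatistic, inner_smul_left, div_eq_inv_mul]
  rw [testPower, moranTest, integral_indicator_const _ (measurableSet_moranRejection D),
    smul_eq_mul, mul_one, Measure.real, twoSampleLaw_zero,
    Measure.prod_apply (measurableSet_moranRejection D), lintegral_congr_ae conditional_level]
  simp [Measure.real]

theorem mem_regularTests_of_eventuallyEq_moranTest {φ : E × E → ℝ} (hφ : IsTest φ) {D α : ℝ}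
    (hα : testPower φ 0 = α) (h : φ =ᶠ[cocompact (E × E)] moranTest D) :
    φ ∈ regularTests E α := by
  refine hφ.mem_regularTests hα fun u => tendsto_const_nhds.congr' ?_
  filter_upwards [(tendsto_add_diag_cocompact u).eventually h,
    eventually_moranTest_add_diag_eq_one D u] with θ hθ hone
  rw [hθ, hone]

theorem exists_testPower_moranTest_lt [Nontrivial E] (D : ℝ) :
    ∃ φ' : E × E → ℝ, IsTest φ' ∧ φ' =ᶠ[cocompact (E × E)] moranTest D ∧
      testPower φ' 0 = testPower (moranTest D) (0 : E) ∧
      (∀ θ, testPower (moranTest D) θ ≤ testPower φ' θ) ∧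
      ∃ θ : E, θ ≠ 0 ∧ testPower (moranTest D) θ < testPower φ' θ := by
  obtain ⟨e, he⟩ := exists_norm_eq E zero_le_one
  have he₀ : e ≠ 0 := norm_ne_zero_iff.1 (he ▸ one_ne_zero)
  have fst_ne {a : ℝ} (ha : 0 < a) (b : ℝ) : (a • e, b • e).1 ≠ 0 := smul_ne_zero ha.ne' he₀
  have rejected {a b : ℝ} (ha : 0 < a) (hb : D < b) :
      ∀ᶠ x in 𝓝 (a • e, b • e), 1 ≤ moranTest D x :=
    (eventually_moranTest_eq_one (fst_ne ha b) (by rwa [moranStatistic_smul_smul he ha])).mono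
      fun _ h => h.ge
  have accepted {a b : ℝ} (ha : 0 < a) (hb : b < D) :
      ∀ᶠ x in 𝓝 (a • e, b • e), moranTest D x ≤ 1 - 1 :=
    (eventually_moranTest_eq_zero (fst_ne ha b) (by rwa [moranStatistic_smul_smul he ha])).mono
      fun _ h => by rw [h, sub_self]
  let R := |D| + 1
  obtain ⟨φ', hφ', hfar, hlevel, hle, hlt⟩ := (isTest_moranTest D).exists_testPower_lt he₀
    (p := (R • e, R • e)) (q₁ := ((3 * R + 1) • e, (-R) • e))
    (q₂ := ((3 * R + 1) • e, (-R - 2) • e)) (by module) (by module) one_pos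
    (rejected (by grind) (by grind)) (accepted (by grind) (by grind))
    (accepted (by grind) (by grind))
  exact ⟨φ', hφ', hfar, hlevel, hle, e, he₀, hlt⟩

end MoranTest

theorem stmt_16_general {E : Type*} [NormedAddCommGroup E] [InnerProductSpace ℝ E]
    [FiniteDimensional ℝ E] [MeasurableSpace E] [BorelSpace E] [Nontrivial E]
    {α D : ℝ} (hD : (gaussianReal 0 1).real (Set.Ioi D) = α) :
    moranTest D ∈ regularTests E α ∧ ∃ φ' ∈ regularTests E α,
      (∀ θ, θ ≠ 0 → testPower (moranTest D) θ ≤ testPower φ' θ) ∧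
      ∃ θ, θ ≠ 0 ∧ testPower (moranTest D) θ < testPower φ' θ := by
  have level : testPower (moranTest D) (0 : E) = α := (testPower_moranTest_zero D).trans hD
  obtain ⟨φ', hφ', hfar, hlevel, hle, hlt⟩ := exists_testPower_moranTest_lt (E := E) D
  exact ⟨mem_regularTests_of_eventuallyEq_moranTest (isTest_moranTest D) level .rfl,
    φ', mem_regularTests_of_eventuallyEq_moranTest hφ' (hlevel.trans level) hfar,
    fun θ _ => hle θ, hlt⟩

/- STATEMENT 16: Moran's multi-dimensional Gaussian test φ is inadmissible among
regular tests: φ ∈ Φ₀(α) \ A₀(α), i.e. there exists φ' ∈ Φ₀(α) with β_{φ'} ≥ β_φ on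
ℝ^d \ {0} and strict inequality for some θ ≠ 0. -/
theorem stmt_16
    (d : ℕ) (hd : 1 ≤ d)
    -- P θ is the law of (U₁ + θ, U₂ + θ) for U₁, U₂ i.i.d. standard Gaussians in ℝ^d
    (P : EuclideanSpace ℝ (Fin d) → Measure (EuclideanSpace ℝ (Fin d) × EuclideanSpace ℝ (Fin d)))
    (hP : P = fun θ =>
      (volume : Measure (EuclideanSpace ℝ (Fin d) × EuclideanSpace ℝ (Fin d))).withDensity
        (fun x => ENNReal.ofReal ((2 * Real.pi) ^ (-(d : ℝ)) *
          Real.exp (-(‖x.1 - θ‖ ^ 2 + ‖x.2 - θ‖ ^ 2) / 2))))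
    (α : ℝ) (hα : α ∈ Set.Ioo (0 : ℝ) 1)
    -- D is the upper α-quantile of the standard one-dimensional Gaussian
    (D : ℝ) (hD : (gaussianReal 0 1 (Set.Ioi D)).toReal = α)
    -- power of an arbitrary test and Moran's test φ (indicator of the rejection zone)
    (β : (EuclideanSpace ℝ (Fin d) × EuclideanSpace ℝ (Fin d) → ℝ) →
      EuclideanSpace ℝ (Fin d) → ℝ)
    (hβ : β = fun φ' θ => ∫ x, φ' x ∂(P θ))
    (φ : EuclideanSpace ℝ (Fin d) × EuclideanSpace ℝ (Fin d) → ℝ)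
    (hφ : φ = Set.indicator
      {x : EuclideanSpace ℝ (Fin d) × EuclideanSpace ℝ (Fin d) |
        x.1 ≠ 0 ∧ D < ⟪x.1, x.2⟫ / ‖x.1‖} (fun _ => (1 : ℝ)))
    -- the class Φ₀(α) of regular tests of level α
    (Φ₀ : Set (EuclideanSpace ℝ (Fin d) × EuclideanSpace ℝ (Fin d) → ℝ))
    (hΦ₀ : Φ₀ = {φ' | Measurable φ' ∧ (∀ x, φ' x ∈ Set.Icc (0 : ℝ) 1) ∧
      β φ' 0 = α ∧ Continuous (fun θ : EuclideanSpace ℝ (Fin d) => 1 - β φ' θ) ∧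
      ∀ ε : ℝ, 0 < ε → ∃ K : Set (EuclideanSpace ℝ (Fin d)), IsCompact K ∧
        {θ : EuclideanSpace ℝ (Fin d) | ε ≤ 1 - β φ' θ} ⊆ K}) :
    -- conclusion: φ ∈ Φ₀(α) \ A₀(α)
    φ ∈ Φ₀ ∧ ∃ φ' ∈ Φ₀,
      (∀ θ : EuclideanSpace ℝ (Fin d), θ ≠ 0 → β φ θ ≤ β φ' θ) ∧
      (∃ θ : EuclideanSpace ℝ (Fin d), θ ≠ 0 ∧ β φ θ < β φ' θ) := by
  have : NeZero d := ⟨by lia⟩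
  subst hP hβ hφ hΦ₀
  simpa only [regularTests, IsTest, and_assoc, testPower, twoSampleLaw_eq_withDensity,
    twoSamplePDFReal_eq, finrank_euclideanSpace_fin] using!
    stmt_16_general (E := EuclideanSpace ℝ (Fin d)) hD
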